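/- The imaginary part of the hermitian form h takes the following values on the pairs of generators of the lattice Λ_A: Im h(𝐞₁,𝐞₂) = −4, Im h(𝐞₁,𝐞₃) = 0, Im h(𝐞₁,𝐞₄) = −2, Im h(𝐞₂,𝐞₃) = −6, Im h(𝐞₂,𝐞₄) = −4, Im h(𝐞₃,𝐞₄) = 6. In particular, Im h takes even integer values on all pairs of elements of Λ_A. -/

import Mathlib

noncomputable section

/-- ζ = (1 + √3·i)/2, a primitive sixth root of unity. -/
def ζ : ℂ := (1 + (Real.sqrt 3 : ℂ) * Complex.I) / 2

def be1 : ℂ × ℂ := (1, 0)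
def be2 : ℂ × ℂ := (ζ, 1)
def be3 : ℂ × ℂ := (0, 1 + ζ)
def be4 : ℂ × ℂ := (0, 2)

/-- The lattice Λ_A = ℤ𝐞₁ ⊕ ℤ𝐞₂ ⊕ ℤ𝐞₃ ⊕ ℤ𝐞₄ ⊂ ℂ². -/
def ΛA : Set (ℂ × ℂ) :=
  {v | ∃ a b c d : ℤ, v = (a : ℂ) • be1 + (b : ℂ) • be2 + (c : ℂ) • be3 + (d : ℂ) • be4}

/-- The hermitian form h representing the class of the branch divisor D_A in NS(A). -/
def h (v w : ℂ × ℂ) : ℂ :=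
  (2 / (Real.sqrt 3 : ℂ)) *
    (3 * v.1 * (starRingEnd ℂ) w.1 - (1 + ζ) * v.1 * (starRingEnd ℂ) w.2
      - (1 + (starRingEnd ℂ) ζ) * v.2 * (starRingEnd ℂ) w.1
      + 3 * v.2 * (starRingEnd ℂ) w.2)

theorem h_im_aux (v w : ℂ × ℂ) : (h v w).im = 2 / Real.sqrt 3 *
    (3 * (v.1.im * w.1.re - v.1.re * w.1.im)
      - (3 / 2 * (v.1.im * w.2.re - v.1.re * w.2.im)
          + Real.sqrt 3 / 2 * (v.1.re * w.2.re + v.1.im * w.2.im))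
      - (3 / 2 * (v.2.im * w.1.re - v.2.re * w.1.im)
          - Real.sqrt 3 / 2 * (v.2.re * w.1.re + v.2.im * w.1.im))
      + 3 * (v.2.im * w.2.re - v.2.re * w.2.im)) := by
  have e : (2 / (Real.sqrt 3 : ℂ)) = ((2 / Real.sqrt 3 : ℝ) : ℂ) := by push_cast; rfl
  unfold h
  rw [e, Complex.im_ofReal_mul]
  congr 1
  have hr : ζ.re = 1 / 2 := by simp [ζ]
  have hi : ζ.im = Real.sqrt 3 / 2 := by simp [ζ]
  simp [-map_add, hr, hi]
  ring

theorem h_im_lattice (a b c d a₂ b₂ c₂ d₂ : ℤ) :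
    (h ((a : ℂ) • be1 + (b : ℂ) • be2 + (c : ℂ) • be3 + (d : ℂ) • be4)
      ((a₂ : ℂ) • be1 + (b₂ : ℂ) • be2 + (c₂ : ℂ) • be3 + (d₂ : ℂ) • be4)).im =
    ((2 * (-2 * (a * b₂ - b * a₂) - (a * d₂ - d * a₂) - 3 * (b * c₂ - c * b₂)
      - 2 * (b * d₂ - d * b₂) + 3 * (c * d₂ - d * c₂)) : ℤ) : ℝ) := by
  have h3 : Real.sqrt 3 ≠ 0 := by positivity
  have hs : Real.sqrt 3 ^ 2 = 3 := Real.sq_sqrt (by norm_num)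
  rw [h_im_aux, div_mul_eq_mul_div, div_eq_iff h3]
  simp [be1, be2, be3, be4, ζ]
  generalize Real.sqrt 3 = s at *
  have hs3 : s ^ 3 = 3 * s := by rw [pow_succ, hs]
  ring_nf
  try simp only [hs3]
  try ring

/-- Values of Im h on pairs of generators of Λ_A; in particular Im h takes even
integer values on all pairs of elements of Λ_A. -/
theorem stmt17 :
    (h be1 be2).im = -4 ∧ (h be1 be3).im = 0 ∧ (h be1 be4).im = -2 ∧
    (h be2 be3).im = -6 ∧ (h be2 be4).im = -4 ∧ (h be3 be4).im = 6 ∧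
    (∀ v ∈ ΛA, ∀ w ∈ ΛA, ∃ n : ℤ, (h v w).im = ((2 * n : ℤ) : ℝ)) := by
  refine ⟨?_, ?_, ?_, ?_, ?_, ?_, ?_⟩
  · have k := h_im_lattice 1 0 0 0 0 1 0 0
    norm_num at k
    exact k
  · have k := h_im_lattice 1 0 0 0 0 0 1 0
    norm_num at k
    exact k
  · have k := h_im_lattice 1 0 0 0 0 0 0 1
    norm_num at k
    exact k
  · have k := h_im_lattice 0 1 0 0 0 0 1 0
    norm_num at k
    exact k
  · have k := h_im_lattice 0 1 0 0 0 0 0 1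
    norm_num at k
    exact k
  · have k := h_im_lattice 0 0 1 0 0 0 0 1
    norm_num at k
    exact k
  · rintro v ⟨a, b, c, d, rfl⟩ w ⟨a₂, b₂, c₂, d₂, rfl⟩
    exact ⟨_, h_im_lattice a b c d a₂ b₂ c₂ d₂⟩
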